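/- Let G be a group and A an abelian group, regarded as a trivial G-module. The maps S^n : Maps(G^n, A) → Maps(G^n, A), S^n(f)(x₁,…,x_n) = Σ_{σ ∈ S_n} ε(σ) f(y₁,…,y_n), where y_k = x_{i₁} ▷ (⋯ ▷ (x_{i_j} ▷ x_{σ(k)})⋯) with x ▷ y = xyx⁻¹ and i₁ < ⋯ < i_j the elements of {σ(k+1),…,σ(n)} smaller than σ(k), form a morphism of cochain complexes from the group cochain complex to the rack cochain complex of Conj(G): for all n ≥ 0 and f : G^n → A, d_R^{n+1}(S^n f) = S^{n+1}(d_G^{n+1} f). -/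

import Mathlib

/-- `y k = x_{i₁} ▷ (⋯ ▷ (x_{i_j} ▷ x_{σ(k)})⋯)` with `x ▷ y = x·y·x⁻¹`, where
`i₁ < ⋯ < i_j` are the elements of `{σ(k+1),…,σ(n)}` (1-indexed) smaller than `σ(k)`. -/
def yGroup {G : Type*} [Group G] {n : ℕ} (σ : Equiv.Perm (Fin n)) (x : Fin n → G)
    (k : Fin n) : G :=
  ((Finset.univ.filter fun i : Fin n =>
      (k : ℕ) < ((σ.symm i : Fin n) : ℕ) ∧ i < σ k).sort (· ≤ ·)).foldr
    (fun i acc => x i * acc * (x i)⁻¹) (x (σ k))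

/-- The map `S^n : Maps(G^n, A) → Maps(G^n, A)`,
`S^n(f)(x₁,…,x_n) = Σ_{σ ∈ S_n} ε(σ)·f(y₁,…,y_n)`. -/
def SMap {G A : Type*} [Group G] [AddCommGroup A] {n : ℕ} (f : (Fin n → G) → A) :
    (Fin n → G) → A :=
  fun x => ∑ σ : Equiv.Perm (Fin n), (Equiv.Perm.sign σ : ℤ) • f (fun k => yGroup σ x k)

/-- The cubical face maps on tuples: for `ε = false` (i.e. ε = 0),
`(x₁,…,x_{n+1}) ↦ (x₁,…,x_{j-1}, x_j ▷ x_{j+1}, …, x_j ▷ x_{n+1})`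
and for `ε = true` (i.e. ε = 1), `(x₁,…,x_{n+1}) ↦ (x₁,…,x_{j-1}, x_{j+1},…,x_{n+1})`
(`j` is 0-indexed here). -/
def rackFace {X : Type*} (op : X → X → X) (ε : Bool) {n : ℕ} (j : Fin (n + 1))
    (x : Fin (n + 1) → X) : Fin n → X :=
  fun k => if (k : ℕ) < (j : ℕ) then x k.castSucc
    else if ε then x k.succ else op (x j) (x k.succ)

/-- The rack differential with trivial coefficients:
`d_R f (x) = Σ_{i=1}^{n+1} (−1)^i [ f(d_{i,0} x) − f(d_{i,1} x) ]`. -/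
def rackDiff {X A : Type*} [AddCommGroup A] (op : X → X → X) {n : ℕ}
    (f : (Fin n → X) → A) : (Fin (n + 1) → X) → A :=
  fun x => ∑ j : Fin (n + 1),
    (-1 : ℤ) ^ ((j : ℕ) + 1) • (f (rackFace op false j x) - f (rackFace op true j x))

/-- The group-cohomology differential with trivial coefficients:
`d_G f(x₁,…,x_{n+1}) = f(x₂,…,x_{n+1}) + Σ_{i=1}^n (−1)^i f(x₁,…,x_i x_{i+1},…,x_{n+1})
  + (−1)^{n+1} f(x₁,…,x_n)`. -/
def groupDiff {G A : Type*} [Group G] [AddCommGroup A] {n : ℕ} (f : (Fin n → G) → A) :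
    (Fin (n + 1) → G) → A :=
  fun x => f (fun k => x k.succ)
    + ∑ i : Fin n, (-1 : ℤ) ^ ((i : ℕ) + 1) •
        f (fun k => if (k : ℕ) < (i : ℕ) then x k.castSucc
            else if (k : ℕ) = (i : ℕ) then x k.castSucc * x k.succ else x k.succ)
    + (-1 : ℤ) ^ (n + 1) • f (fun k => x k.castSucc)

def Qp {G : Type*} [Group G] {n : ℕ} (g : Fin n → G) : G := (List.ofFn g).prod

lemma Qp_succ {G : Type*} [Group G] {n : ℕ} (g : Fin (n+1) → G) :
    Qp g = g 0 * Qp (fun k => g k.succ) := by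
  simp [Qp, List.ofFn_succ]

lemma Qp_conj {G : Type*} [Group G] {n : ℕ} (c : G) (g : Fin n → G) :
    Qp (fun k => c * g k * c⁻¹) = c * Qp g * c⁻¹ := by
  induction n with
  | zero => simp [Qp]
  | succ n ih => rw [Qp_succ, Qp_succ, ih]; group

lemma Qp_one {G : Type*} [Group G] {n : ℕ} : Qp (fun _ : Fin n => (1:G)) = 1 := by
  induction n with
  | zero => simp [Qp]
  | succ n ih => rw [Qp_succ, ih]; simp

lemma Qp_pivot {G : Type*} [Group G] {n : ℕ} (g : Fin n → G) (a : Fin n) :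
    Qp g = Qp (fun i => if i < a then g i else 1) * g a * Qp (fun i => if a < i then g i else 1) := by
  induction n with
  | zero => exact a.elim0
  | succ n ih =>
    rw [Qp_succ g, Qp_succ (fun i => if i < a then g i else 1),
      Qp_succ (fun i => if a < i then g i else 1)]
    cases a using Fin.cases with
    | zero => simp [Qp_one]
    | succ a =>
      rw [ih (fun k => g k.succ) a]
      simp [mul_assoc]

lemma Qp_face {G : Type*} [Group G] {n : ℕ} (g : Fin (n+1) → G) (j : Fin (n+1)) (h : Fin n → G)
    (hh : ∀ k : Fin n, h k = if (k:ℕ) < (j:ℕ) then g k.castSucc else g j * g k.succ * (g j)⁻¹) :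
    Qp h * g j = Qp g := by
  induction n with
  | zero =>
    have : j = 0 := Fin.ext (by have := j.isLt; simp only [Fin.val_zero]; omega)
    subst this
    simp [Qp]
  | succ n ih =>
    cases j using Fin.cases with
    | zero =>
      have : h = fun k => g 0 * g k.succ * (g 0)⁻¹ := by
        funext k; rw [hh]; simp
      rw [this, Qp_conj, Qp_succ g]; group
    | succ j =>
      rw [Qp_succ h, Qp_succ g, mul_assoc, ih (fun k => g k.succ) j]
      · rw [hh]; simp
      · intro k; rw [hh]; simp

lemma foldr_conj {G ι : Type*} [Group G] (x : ι → G) (l : List ι) (z : G) :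
    l.foldr (fun i acc => x i * acc * (x i)⁻¹) z = (l.map x).prod * z * ((l.map x).prod)⁻¹ := by
  induction l with
  | nil => simp
  | cons a l ih => rw [List.foldr_cons, ih]; simp [mul_assoc]

lemma prod_filter_ite {G ι : Type*} [Group G] (x : ι → G) (p : ι → Prop) [DecidablePred p]
    (l : List ι) :
    ((l.filter (fun i => p i)).map x).prod = (l.map (fun i => if p i then x i else 1)).prod := by
  induction l with
  | nil => simp
  | cons a l ih => by_cases h : p a <;> simp [h, ih]

lemma sort_filter {n : ℕ} (p : Fin n → Prop) [DecidablePred p] :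
    (Finset.univ.filter p).sort (· ≤ ·) = (List.finRange n).filter (fun i => p i) := by
  apply List.Perm.eq_of_pairwise (le := (· ≤ ·))
  · intro a b _ _ h1 h2; exact le_antisymm h1 h2
  · exact Finset.pairwise_sort _ _
  · exact ((List.pairwise_lt_finRange n).imp le_of_lt).filter _
  · rw [List.perm_ext_iff_of_nodup (Finset.sort_nodup _ _) ((List.nodup_finRange n).filter _)]
    simp

def Lp {G : Type*} [Group G] {n : ℕ} (σ : Equiv.Perm (Fin n)) (x : Fin n → G) (k : Fin n) : G :=
  Qp (fun i => if k < σ.symm i ∧ i < σ k then x i else 1)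

lemma yGroup_eq {G : Type*} [Group G] {n : ℕ} (σ : Equiv.Perm (Fin n)) (x : Fin n → G)
    (k : Fin n) : yGroup σ x k = Lp σ x k * x (σ k) * (Lp σ x k)⁻¹ := by
  unfold yGroup Lp Qp
  rw [foldr_conj, sort_filter, prod_filter_ite, List.ofFn_eq_map]
  simp only [Fin.lt_def]

/-- permutation with `0 ↦ j`. -/
def mkP {n : ℕ} (p : Fin (n+1) × Equiv.Perm (Fin n)) : Equiv.Perm (Fin (n+1)) :=
  p.1.cycleRange.symm * Equiv.Perm.decomposeFin.symm (0, p.2)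

lemma mkP_zero {n : ℕ} (p : Fin (n+1) × Equiv.Perm (Fin n)) : mkP p 0 = p.1 := by
  simp [mkP]

lemma mkP_succ {n : ℕ} (p : Fin (n+1) × Equiv.Perm (Fin n)) (k : Fin n) :
    mkP p k.succ = p.1.succAbove (p.2 k) := by
  simp [mkP]

lemma mkP_symm {n : ℕ} (p : Fin (n+1) × Equiv.Perm (Fin n)) (m : Fin n) :
    (mkP p).symm (p.1.succAbove m) = (p.2.symm m).succ := by
  rw [Equiv.symm_apply_eq, mkP_succ]; simp

lemma mkP_symm_self {n : ℕ} (p : Fin (n+1) × Equiv.Perm (Fin n)) :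
    (mkP p).symm p.1 = 0 := by
  rw [Equiv.symm_apply_eq, mkP_zero]

lemma mkP_sign {n : ℕ} (p : Fin (n+1) × Equiv.Perm (Fin n)) :
    (Equiv.Perm.sign (mkP p) : ℤ) = (-1) ^ (p.1 : ℕ) * Equiv.Perm.sign p.2 := by
  simp [mkP, Fin.sign_cycleRange, Equiv.Perm.sign_mul, Equiv.Perm.decomposeFin.symm_sign]

lemma mkP_bij {n : ℕ} : Function.Bijective (mkP (n := n)) := by
  rw [Fintype.bijective_iff_injective_and_card]
  constructor
  · rintro ⟨j, τ⟩ ⟨j', τ'⟩ h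
    have h0 : j = j' := by
      have := congrArg (fun s => s 0) h
      simpa [mkP_zero] using this
    subst h0
    congr 1
    ext k : 1
    have := congrArg (fun s => s k.succ) h
    simpa [mkP_succ] using this
  · simp [Fintype.card_perm, Nat.factorial_succ]

lemma face_sum_first {G A : Type*} [Group G] [AddCommGroup A] {n : ℕ}
    (f : (Fin n → G) → A) (op : G → G → G) (x : Fin (n+1) → G) (p : Fin (n+1) × Equiv.Perm (Fin n)) :
    (fun k : Fin n => yGroup (mkP p) x k.succ) = fun k => yGroup p.2 (rackFace op true p.1 x) k := by
  have hx : ∀ m, rackFace op true p.1 x m = x (p.1.succAbove m) := by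
    intro m
    simp [rackFace, Fin.succAbove, Fin.lt_def]
    split_ifs <;> rfl
  funext k
  rw [yGroup_eq, yGroup_eq, mkP_succ, hx]
  have : Lp (mkP p) x k.succ = Lp p.2 (rackFace op true p.1 x) k := by
    unfold Lp
    rw [← Qp_face _ p.1 (fun i => if k < p.2.symm i ∧ i < p.2 k then rackFace op true p.1 x i else 1)]
    · simp [mkP_symm_self]
    · intro i
      have e := mkP_symm p i
      simp only [mkP_symm_self, hx]
      simp only [mkP_succ]
      by_cases hi : (i:ℕ) < (p.1:ℕ)
      · have e1 : p.1.succAbove i = i.castSucc := Fin.succAbove_of_castSucc_lt _ _ hi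
        rw [← e1]; simp [hi, e]
      · have e1 : p.1.succAbove i = i.succ := Fin.succAbove_of_le_castSucc _ _ (by simpa [Fin.le_def] using hi)
        rw [← e1]; simp [hi, e]
  rw [this]

/-- permutation with `last ↦ j`. -/
def mkL {n : ℕ} (p : Fin (n+1) × Equiv.Perm (Fin n)) : Equiv.Perm (Fin (n+1)) :=
  mkP p * finRotate (n+1)

lemma mkL_last {n : ℕ} (p : Fin (n+1) × Equiv.Perm (Fin n)) : mkL p (Fin.last n) = p.1 := by
  simp [mkL, mkP_zero]

lemma mkL_castSucc {n : ℕ} (p : Fin (n+1) × Equiv.Perm (Fin n)) (k : Fin n) :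
    mkL p k.castSucc = p.1.succAbove (p.2 k) := by
  simp [mkL, ← mkP_succ]

lemma mkL_symm {n : ℕ} (p : Fin (n+1) × Equiv.Perm (Fin n)) (m : Fin n) :
    (mkL p).symm (p.1.succAbove m) = (p.2.symm m).castSucc := by
  rw [Equiv.symm_apply_eq, mkL_castSucc]; simp

lemma mkL_symm_self {n : ℕ} (p : Fin (n+1) × Equiv.Perm (Fin n)) :
    (mkL p).symm p.1 = Fin.last n := by
  rw [Equiv.symm_apply_eq, mkL_last]

lemma mkL_sign {n : ℕ} (p : Fin (n+1) × Equiv.Perm (Fin n)) :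
    (Equiv.Perm.sign (mkL p) : ℤ) = (-1) ^ n * ((-1) ^ (p.1 : ℕ) * Equiv.Perm.sign p.2) := by
  rw [mkL, Equiv.Perm.sign_mul, Units.val_mul, mkP_sign, sign_finRotate]
  push_cast; ring

lemma mkL_bij {n : ℕ} : Function.Bijective (mkL (n := n)) :=
  (Equiv.mulRight (finRotate (n+1))).bijective.comp mkP_bij

lemma face_sum_last {G : Type*} [Group G] {n : ℕ}
    (x : Fin (n+1) → G) (p : Fin (n+1) × Equiv.Perm (Fin n)) :
    (fun k : Fin n => yGroup (mkL p) x k.castSucc) =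
      fun k => yGroup p.2 (rackFace (fun x y : G => x * y * x⁻¹) false p.1 x) k := by
  set op := (fun x y : G => x * y * x⁻¹) with hop
  have hx1 : ∀ m : Fin n, (m:ℕ) < p.1 → rackFace op false p.1 x m = x (p.1.succAbove m) := by
    intro m hm
    have e1 : p.1.succAbove m = m.castSucc := Fin.succAbove_of_castSucc_lt _ _ hm
    simp [rackFace, hm, e1]
  have hx2 : ∀ m : Fin n, ¬ (m:ℕ) < p.1 →
      rackFace op false p.1 x m = x p.1 * x (p.1.succAbove m) * (x p.1)⁻¹ := by
    intro m hm
    have e1 : p.1.succAbove m = m.succ :=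
      Fin.succAbove_of_le_castSucc _ _ (by simpa [Fin.le_def] using hm)
    simp [rackFace, hm, e1, hop]
  funext k
  rw [yGroup_eq, yGroup_eq, mkL_castSucc]
  set c : G := if p.1 < p.1.succAbove (p.2 k) then x p.1 else 1 with hc
  have key : Lp p.2 (rackFace op false p.1 x) k * c = Lp (mkL p) x k.castSucc := by
    unfold Lp
    have hcc : c = (fun i => if k.castSucc < (mkL p).symm i ∧ i < mkL p k.castSucc
        then x i else 1) p.1 := by
      simp [hc, mkL_symm_self, mkL_castSucc, Fin.castSucc_lt_last]
    rw [← Qp_face (fun i => if k.castSucc < (mkL p).symm i ∧ i < mkL p k.castSucc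
        then x i else 1) p.1
        (fun i => if k < p.2.symm i ∧ i < p.2 k then rackFace op false p.1 x i else 1)]
    · exact congrArg _ hcc
    intro i
    beta_reduce at hcc
    rw [← hcc]
    have e := mkL_symm p i
    simp only [mkL_castSucc]
    by_cases hi : (i:ℕ) < (p.1:ℕ)
    · have e1 : p.1.succAbove i = i.castSucc := Fin.succAbove_of_castSucc_lt _ _ hi
      rw [hx1 i hi, ← e1]; simp [hi, e]
    · have e1 : p.1.succAbove i = i.succ := Fin.succAbove_of_le_castSucc _ _ (by simpa [Fin.le_def] using hi)
      rw [hx2 i hi, ← e1]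
      by_cases hL : k < p.2.symm i ∧ i < p.2 k
      · have : p.1 < p.1.succAbove (p.2 k) := by
          apply Fin.lt_succAbove_iff_le_castSucc _ _ |>.2
          simp [Fin.le_def]; have := hL.2; rw [Fin.lt_def] at this; omega
        simp [hi, e, hL, hc, this]
      · simp [hi, e, hL]
  rw [← key]
  by_cases hk : ((p.2 k : Fin n):ℕ) < p.1
  · have : ¬ p.1 < p.1.succAbove (p.2 k) := by
      rw [Fin.lt_succAbove_iff_le_castSucc]
      simpa [Fin.le_def] using hk
    rw [hx1 _ hk, hc, if_neg this]; simp
  · have : p.1 < p.1.succAbove (p.2 k) := by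
      rw [Fin.lt_succAbove_iff_le_castSucc]
      simpa [Fin.le_def] using hk
    rw [hx2 _ hk, hc, if_pos this]; group

/-- the middle face. -/
def midFace {G : Type*} [Group G] {n : ℕ} (i : Fin n) (x : Fin (n+1) → G) : Fin n → G :=
  fun k => if (k : ℕ) < (i : ℕ) then x k.castSucc
            else if (k : ℕ) = (i : ℕ) then x k.castSucc * x k.succ else x k.succ

lemma Lp_swap_ne {G : Type*} [Group G] {n : ℕ} (i : Fin n) (x : Fin (n+1) → G)
    (σ : Equiv.Perm (Fin (n+1))) (k : Fin (n+1)) (h1 : k ≠ i.castSucc) (h2 : k ≠ i.succ) :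
    yGroup (σ * Equiv.swap i.castSucc i.succ) x k = yGroup σ x k := by
  have e : (σ * Equiv.swap i.castSucc i.succ) k = σ k := by
    simp [Equiv.swap_apply_of_ne_of_ne h1 h2]
  have : Lp (σ * Equiv.swap i.castSucc i.succ) x k = Lp σ x k := by
    unfold Lp
    congr 1
    funext m
    rw [e]
    have : k < (σ * Equiv.swap i.castSucc i.succ).symm m ↔ k < σ.symm m := by
      have : (σ * Equiv.swap i.castSucc i.succ).symm m = Equiv.swap i.castSucc i.succ (σ.symm m) := by
        rw [Equiv.symm_apply_eq]; simp
      rw [this, Equiv.swap_apply_def]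
      simp only [ne_eq, Fin.ext_iff, Fin.val_castSucc, Fin.val_succ] at h1 h2
      split_ifs with h h <;> simp only [h, Fin.lt_def, Fin.val_castSucc, Fin.val_succ] <;> omega
    simp only [this]
  rw [yGroup_eq, yGroup_eq, this, e]

lemma mid_lt {G : Type*} [Group G] {n : ℕ} (i : Fin n) (x : Fin (n+1) → G)
    (σ : Equiv.Perm (Fin (n+1))) (hlt : σ i.castSucc < σ i.succ) :
    midFace i (fun k => yGroup (σ * Equiv.swap i.castSucc i.succ) x k) =
      midFace i (fun k => yGroup σ x k) := by
  funext k
  unfold midFace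
  split_ifs with h1 h2
  · apply Lp_swap_ne <;> simp [Fin.ext_iff] <;> omega
  · have : k = i := Fin.ext h2
    subst this
    set a := σ k.castSucc with ha
    set b := σ k.succ with hb
    have hs : ∀ m, (σ * Equiv.swap k.castSucc k.succ).symm m
        = Equiv.swap k.castSucc k.succ (σ.symm m) := by
      intro m
      rw [Equiv.symm_apply_eq]; simp
    have hsa : σ.symm a = k.castSucc := by simp [ha]
    have hsb : σ.symm b = k.succ := by simp [hb]
    -- common pieces
    have gen : ∀ m, m ≠ a → m ≠ b → σ.symm m ≠ k.castSucc ∧ σ.symm m ≠ k.succ := by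
      intro m h1 h2
      constructor
      · intro h; apply h1; rw [ha, ← h]; simp
      · intro h; apply h2; rw [hb, ← h]; simp
    set U := Qp (fun m => if m < a then (if k.succ < σ.symm m then x m else 1) else 1) with hU
    set V := Qp (fun m => if a < m then
        (if k.succ < σ.symm m ∧ m < b then x m else 1) else 1) with hV
    have L1 : Lp σ x k.castSucc = U := by
      rw [Lp, hU]; congr 1; funext m
      rw [← ha]
      by_cases hm : m < a
      · obtain ⟨g1, g2⟩ := gen m hm.ne (hm.trans hlt).ne
        have : k.castSucc < σ.symm m ↔ k.succ < σ.symm m := by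
          simp only [ne_eq, Fin.ext_iff, Fin.lt_def, Fin.val_castSucc, Fin.val_succ] at *
          omega
        simp [hm, this]
      · simp [hm]
    have L2 : Lp σ x k.succ = U * V := by
      rw [Lp, Qp_pivot _ a, hU, hV, ← hb]
      have : ¬ k.succ < σ.symm a := by simp [hsa, Fin.lt_def]
      simp only [this, false_and, if_false, mul_one]
      congr 2
      funext m
      by_cases hm : m < a
      · simp [hm, hm.trans hlt]
      · simp [hm]
    have L3 : Lp (σ * Equiv.swap k.castSucc k.succ) x k.succ = U := by
      rw [Lp, hU]; congr 1; funext m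
      have : (σ * Equiv.swap k.castSucc k.succ) k.succ = a := by simp [ha]
      rw [this, hs]
      by_cases hm : m < a
      · obtain ⟨g1, g2⟩ := gen m hm.ne (hm.trans hlt).ne
        rw [Equiv.swap_apply_of_ne_of_ne g1 g2]
        simp [hm]
      · simp [hm]
    have L4 : Lp (σ * Equiv.swap k.castSucc k.succ) x k.castSucc = U * x a * V := by
      rw [Lp, Qp_pivot _ a, hU, hV]
      have e : (σ * Equiv.swap k.castSucc k.succ) k.castSucc = b := by simp [hb]
      have : k.castSucc < (σ * Equiv.swap k.castSucc k.succ).symm a := by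
        rw [hs, hsa]; simp [Fin.lt_def]
      rw [e]
      have gg : ∀ m, m < b → m ≠ a → (k.castSucc < (σ * Equiv.swap k.castSucc k.succ).symm m ↔
          k.succ < σ.symm m) := by
        intro m h1 h2
        obtain ⟨g1, g2⟩ := gen m h2 h1.ne
        rw [hs, Equiv.swap_apply_of_ne_of_ne g1 g2]
        simp only [ne_eq, Fin.ext_iff, Fin.lt_def, Fin.val_castSucc, Fin.val_succ] at *
        omega
      rw [if_pos ⟨this, hlt⟩]
      congr 2
      · congr 2
        funext m
        by_cases hm : m < a
        · simp [hm, hm.trans hlt, gg m (hm.trans hlt) hm.ne]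
        · simp [hm]
      · funext m
        by_cases hm : m < b
        · by_cases hm2 : a < m
          · simp [hm, hm2, gg m hm hm2.ne']
          · simp [hm2]
        · simp [hm]
    beta_reduce
    rw [yGroup_eq, yGroup_eq, yGroup_eq, yGroup_eq, L1, L2, L3, L4]
    simp only [Equiv.Perm.mul_apply, Equiv.swap_apply_left, Equiv.swap_apply_right, ← ha, ← hb]
    group
  · apply Lp_swap_ne <;> simp [Fin.ext_iff] <;> omega

lemma mid_eq {G : Type*} [Group G] {n : ℕ} (i : Fin n) (x : Fin (n+1) → G)
    (σ : Equiv.Perm (Fin (n+1))) :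
    midFace i (fun k => yGroup (σ * Equiv.swap i.castSucc i.succ) x k) =
      midFace i (fun k => yGroup σ x k) := by
  rcases lt_trichotomy (σ i.castSucc) (σ i.succ) with h | h | h
  · exact mid_lt i x σ h
  · have := σ.injective h
    simp [Fin.ext_iff] at this
  · have := mid_lt i x (σ * Equiv.swap i.castSucc i.succ) (by simpa using h)
    rw [← this, mul_assoc, Equiv.swap_mul_self, mul_one]

lemma mid_sum {G A : Type*} [Group G] [AddCommGroup A] {n : ℕ} (f : (Fin n → G) → A)
    (i : Fin n) (x : Fin (n+1) → G) :
    ∑ σ : Equiv.Perm (Fin (n+1)), (Equiv.Perm.sign σ : ℤ) •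
      f (midFace i (fun k => yGroup σ x k)) = 0 := by
  have hne : i.castSucc ≠ i.succ := by simp [Fin.ext_iff]
  apply Finset.sum_involution (fun σ _ => σ * Equiv.swap i.castSucc i.succ)
  · intro σ _
    rw [mid_eq, Equiv.Perm.sign_mul, Equiv.Perm.sign_swap hne]
    simp
  · intro σ _ _ h
    rw [mul_eq_left, Equiv.swap_eq_one_iff] at h
    exact hne h
  · intros; exact Finset.mem_univ _
  · intro σ _
    simp [mul_assoc]

/-- The maps `S^n` form a morphism of cochain complexes from the group
cochain complex of `G` to the rack cochain complex of `Conj(G)`: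
`d_R ∘ S^n = S^{n+1} ∘ d_G`. -/
theorem statement14 {G A : Type*} [Group G] [AddCommGroup A] (n : ℕ)
    (f : (Fin n → G) → A) :
    rackDiff (fun x y : G => x * y * x⁻¹) (SMap f) = SMap (groupDiff f) := by
  funext x
  have hR : SMap (groupDiff f) x =
      (∑ σ : Equiv.Perm (Fin (n+1)), (Equiv.Perm.sign σ : ℤ) • f (fun k => yGroup σ x k.succ))
      + (∑ i : Fin n, (-1 : ℤ) ^ ((i : ℕ) + 1) • ∑ σ : Equiv.Perm (Fin (n+1)),
          (Equiv.Perm.sign σ : ℤ) • f (midFace i (fun k => yGroup σ x k)))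
      + (-1 : ℤ) ^ (n + 1) • ∑ σ : Equiv.Perm (Fin (n+1)),
          (Equiv.Perm.sign σ : ℤ) • f (fun k => yGroup σ x k.castSucc) := by
    simp only [SMap, groupDiff, smul_add, Finset.sum_add_distrib, Finset.smul_sum]
    congr 1
    · congr 1
      rw [Finset.sum_comm]
      refine Finset.sum_congr rfl fun i _ => Finset.sum_congr rfl fun σ _ => ?_
      rw [smul_comm]; rfl
    · refine Finset.sum_congr rfl fun σ _ => ?_
      rw [smul_comm]
  rw [hR]
  simp only [mid_sum, smul_zero, Finset.sum_const_zero, add_zero]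
  rw [← mkP_bij.sum_comp, ← mkL_bij.sum_comp, Finset.smul_sum, ← Finset.sum_add_distrib,
    Fintype.sum_prod_type]
  simp only [rackDiff, SMap]
  refine Finset.sum_congr rfl fun j _ => ?_
  rw [← Finset.sum_sub_distrib, Finset.smul_sum]
  refine Finset.sum_congr rfl fun τ _ => ?_
  rw [face_sum_first f (fun x y : G => x * y * x⁻¹), face_sum_last, mkP_sign, mkL_sign, smul_sub, smul_smul, smul_smul, smul_smul]
  have h : (-1 : ℤ) ^ n * (-1) ^ n = 1 := by rw [← mul_pow]; simp
  have h1 : (-1 : ℤ) ^ (n + 1) * ((-1) ^ n * ((-1) ^ (j:ℕ) * (Equiv.Perm.sign τ : ℤ))) =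
      (-1 : ℤ) ^ ((j:ℕ) + 1) * (Equiv.Perm.sign τ : ℤ) := by
    linear_combination (-((-1 : ℤ) ^ (j:ℕ) * (Equiv.Perm.sign τ : ℤ))) * h
  rw [h1, pow_succ, mul_neg_one, neg_mul, neg_smul, neg_smul]
  abel
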